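/- Let n be a positive integer and let P be a finite poset. If P order-embeds into a product of n linearly ordered sets (with componentwise ordering), i.e., the order-dimension of P is at most n, then (κ^{+(n-1)},<κ)⤳P holds for every infinite cardinal κ. -/

import Mathlib

/-!
Ranking each coordinate turns the embedding into maps `r i : P → ℕ`, `i < n`, such that `z ≰ x`
forces some `i` with `r i w < r i z` for all `w ≤ x`. It therefore suffices to find `f : P → A` with
`f z ∉ F (f '' X) ∪ f '' X` whenever all elements of `X` have smaller `i`-th rank than `z`
for some `i`; containing `f '' X` in the forbidden set also makes `f` injective.

Such an `f` is found by induction on `n`, for the stronger assertion in which the value `f z` is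
prescribed to lie in a given set `D z` of size at least `κ^{+(n-1)}` (nonempty if `n = 0`).
To absorb one more coordinate `r`, take an increasing sequence `B 0 ⊆ B 1 ⊆ ⋯` of subsets of `A`,
each of size at most `κ^{+(n-1)}` (finite if `n = 0`), such that `B (k + 1)` contains at least
`κ^{+(n-1)}` (one if `n = 0`) elements of each `D z` outside the hull of `B k`, that is, outside
all `F`-values of finite subsets of `B k`.
Requiring `f z ∈ B (r z + 1) \ hull (B (r z))` settles the coordinate `r`, and the induction
hypothesis for the shrunken sets settles the others simultaneously. The sequence exists because
the hull of a set of size `λ ≥ κ` has size at most `λ`, whereas the hull of a finite set has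
size less than `κ`.
-/

universe u v w

open Cardinal

/-- The relation `(κ,<λ)⤳P`: for every map `F` from the powerset of (a set of size) `κ`
to the subsets of size `< λ`, there is an injective `f : P → κ` such that
`F(f''(P↓x)) ∩ f''(P↓y) ⊆ f''(P↓x)` whenever `x ≤ y` in `P`. -/
def Leadsto (κ lam : Cardinal.{u}) (P : Type v) [PartialOrder P] : Prop :=
  ∀ A : Type u, #A = κ →
    ∀ F : Set A → Set A, (∀ X : Set A, #↥(F X) < lam) →
      ∃ f : P → A, Function.Injective f ∧
        ∀ x y : P, x ≤ y →
          F (f '' Set.Iic x) ∩ f '' Set.Iic y ⊆ f '' Set.Iic x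

/-- The `n`-th cardinal successor `κ⁺ⁿ`. -/
noncomputable def succN (κ : Cardinal.{u}) (n : ℕ) : Cardinal.{u} := Order.succ^[n] κ

/-- The union of the `G`-values of all finite subsets of `B`. -/
def finHull {A : Type u} (G : Set A → Set A) (B : Set A) : Set A :=
  ⋃ X : Finset B, G (Subtype.val '' (X : Set B))

lemma subset_finHull {A : Type u} (G : Set A → Set A) {B X : Set A} (hX : X.Finite)
    (hXB : X ⊆ B) : G X ⊆ finHull G B := by
  classical
  have hf : (Subtype.val ⁻¹' X : Set B).Finite := hX.preimage Subtype.val_injective.injOn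
  intro a ha
  refine Set.mem_iUnion.2 ⟨hf.toFinset, ?_⟩
  rw [Set.Finite.coe_toFinset, Subtype.image_preimage_coe, Set.inter_eq_right.2 hXB]
  exact ha

/-- Values of `f` can be chosen in any sets `D z` with at least `t` elements so that `f z` avoids
`G (f '' X)` whenever, for some of the `n` rank functions, `z` has larger rank than all of `X`. -/
def Avoidable {A : Type u} (G : Set A → Set A) (Q : Type v) (n : ℕ) (t : Cardinal.{u}) : Prop :=
  ∀ (r : Fin n → Q → ℕ) (D : Q → Set A), (∀ z, t ≤ #(D z)) →
    ∃ f : Q → A, (∀ z, f z ∈ D z) ∧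
      ∀ i z (X : Set Q), (∀ w ∈ X, r i w < r i z) → f z ∉ G (f '' X)

/-- Adding one rank function: the inductive step, for an arbitrary notion `S` of small set. -/
lemma Avoidable.step {A : Type u} {G : Set A → Set A} {Q : Type v} [Finite Q] {n : ℕ}
    {t t' : Cardinal.{u}} (h : Avoidable G Q n t) (S : Set A → Prop) (S0 : S ∅)
    (hS : ∀ D : Q → Set A, (∀ z, t' ≤ #(D z)) → ∀ B, S B →
      ∃ B', B ⊆ B' ∧ S B' ∧ ∀ z, t ≤ #↥(D z ∩ (B' \ finHull G B))) :
    Avoidable G Q (n + 1) t' := by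
  intro r D hD
  choose! next hsub hsmall hbig using hS D hD
  let B : ℕ → Set A := fun k => next^[k] ∅
  have hB1 : ∀ k, B (k + 1) = next (B k) := fun k => Function.iterate_succ_apply' next k ∅
  have hBS : ∀ k, S (B k) := by
    intro k
    induction k with
    | zero => exact S0
    | succ k ih => rw [hB1]; exact hsmall _ ih
  have hmono : Monotone B := monotone_nat_of_le_succ fun k => by
    rw [hB1]; exact hsub _ (hBS k)
  obtain ⟨f, hfD, hf⟩ := h (fun i => r i.succ)
    (fun z => D z ∩ (B (r 0 z + 1) \ finHull G (B (r 0 z))))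
    (fun z => by rw [hB1]; exact hbig _ (hBS _) z)
  refine ⟨f, fun z => (hfD z).1, fun i z X hX => ?_⟩
  rcases Fin.eq_zero_or_eq_succ i with rfl | ⟨j, rfl⟩
  · refine fun hz => (hfD z).2.2 (subset_finHull G ((Set.toFinite X).image f) ?_ hz)
    rintro _ ⟨w, hw, rfl⟩
    exact hmono (hX w hw) (hfD w).2.1
  · exact hf j z X hX

lemma mk_finHull_lt {A : Type u} {G : Set A → Set A} {κ : Cardinal.{u}} (hκ : ℵ₀ ≤ κ)
    (hG : ∀ X : Set A, X.Finite → #(G X) < κ) {B : Set A} (hB : B.Finite) :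
    #(finHull G B) < κ := by
  have := hB.to_subtype
  refine (mk_iUnion_le _).trans_lt (mul_lt_of_lt hκ ((lt_aleph0_of_finite _).trans_le hκ) ?_)
  obtain ⟨X, hX⟩ := exists_eq_ciSup_of_finite
    (f := fun X : Finset B => #(G (Subtype.val '' (X : Set B))))
  rw [← hX]
  exact hG _ (X.finite_toSet.image _)

lemma mk_finHull_le {A : Type u} {G : Set A → Set A} {κ l : Cardinal.{u}} (hκ : ℵ₀ ≤ κ)
    (hl : κ ≤ l) (hG : ∀ X : Set A, X.Finite → #(G X) < κ) {B : Set A} (hB : #B ≤ l) :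
    #(finHull G B) ≤ l := by
  have hl0 := hκ.trans hl
  refine (mk_iUnion_le _).trans (mul_le_of_le hl0 ?_ ?_)
  · rcases finite_or_infinite B with hfin | hinf
    · exact (lt_aleph0_of_finite _).le.trans hl0
    · rwa [mk_finset_of_infinite]
  · exact ciSup_le' fun X => (hG _ (X.finite_toSet.image _)).le.trans hl

lemma avoidable_zero {A : Type u} (G : Set A → Set A) (Q : Type v) : Avoidable G Q 0 1 := by
  intro r D hD
  have hne : ∀ z, (D z).Nonempty := fun z =>
    Set.nonempty_coe_sort.1 (mk_ne_zero_iff.1 (Cardinal.one_le_iff_ne_zero.1 (hD z)))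
  choose f hf using hne
  exact ⟨f, hf, fun i => i.elim0⟩

lemma avoidable_one {A : Type u} {G : Set A → Set A} {κ : Cardinal.{u}} (hκ : ℵ₀ ≤ κ)
    (hG : ∀ X : Set A, X.Finite → #(G X) < κ) (Q : Type v) [Finite Q] : Avoidable G Q 1 κ := by
  refine (avoidable_zero G Q).step Set.Finite Set.finite_empty fun D hD B hB => ?_
  have hne : ∀ z, (D z \ finHull G B).Nonempty := by
    intro z
    by_contra hcon
    have hsub := Set.sdiff_eq_empty.1 (Set.not_nonempty_iff_eq_empty.1 hcon)
    exact ((hD z).trans (mk_le_mk_of_subset hsub)).not_gt (mk_finHull_lt hκ hG hB)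
  choose a ha using hne
  refine ⟨B ∪ Set.range a, Set.subset_union_left, hB.union (Set.finite_range a), fun z => ?_⟩
  rw [Cardinal.one_le_iff_ne_zero, mk_ne_zero_iff]
  exact ⟨⟨a z, (ha z).1, Or.inr ⟨z, rfl⟩, (ha z).2⟩⟩

lemma Avoidable.succ {A : Type u} {G : Set A → Set A} {κ l : Cardinal.{u}} (hκ : ℵ₀ ≤ κ)
    (hl : κ ≤ l) (hG : ∀ X : Set A, X.Finite → #(G X) < κ) {Q : Type v} [Finite Q] {n : ℕ}
    (h : Avoidable G Q n l) : Avoidable G Q (n + 1) (Order.succ l) := by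
  have hl0 := hκ.trans hl
  refine h.step (fun B => #B ≤ l) (by simp) fun D hD B hB => ?_
  have hT : ∀ z, ∃ T ⊆ D z \ finHull G B, #T = l := by
    intro z
    refine le_mk_iff_exists_subset.1 ?_
    by_contra! hcon
    have hle : #(D z) ≤ #↥(D z \ finHull G B) + #(finHull G B) :=
      (mk_le_mk_of_subset (by simp)).trans (mk_union_le (D z \ finHull G B) (finHull G B))
    have := hle.trans (add_le_of_le hl0 hcon.le (mk_finHull_le hκ hl hG hB))
    exact (Order.lt_succ l).not_ge ((hD z).trans this)
  choose T hTs hTl using hT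
  refine ⟨B ∪ ⋃₀ Set.range T, Set.subset_union_left, ?_, fun z => ?_⟩
  · refine (mk_union_le _ _).trans (add_le_of_le hl0 hB ?_)
    refine (mk_sUnion_le _).trans (mul_le_of_le hl0 ?_ (ciSup_le' ?_))
    · exact (Set.finite_range T).lt_aleph0.le.trans hl0
    · rintro ⟨_, z, rfl⟩
      exact (hTl z).le
  · rw [← hTl z]
    exact mk_le_mk_of_subset fun a ha =>
      ⟨(hTs z ha).1, Or.inr ⟨T z, ⟨z, rfl⟩, ha⟩, (hTs z ha).2⟩

lemma le_succN (κ : Cardinal.{u}) (n : ℕ) : κ ≤ succN κ n :=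
  Order.le_succ_iterate n κ

lemma avoidable_succN {A : Type u} {G : Set A → Set A} {κ : Cardinal.{u}} (hκ : ℵ₀ ≤ κ)
    (hG : ∀ X : Set A, X.Finite → #(G X) < κ) (Q : Type v) [Finite Q] (n : ℕ) :
    Avoidable G Q (n + 1) (succN κ n) := by
  induction n with
  | zero => exact avoidable_one hκ hG Q
  | succ n ih =>
    have := ih.succ hκ (le_succN κ n) hG
    rwa [succN, ← Function.iterate_succ_apply' Order.succ n κ] at this

/-- If a finite poset `P` order-embeds into a product of `n` linearly ordered sets
(i.e., its order-dimension is at most `n`), then `(κ^{+(n-1)},<κ)⤳P` holds for every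
infinite cardinal `κ`. -/
theorem stmt9 (n : ℕ) (hn : 0 < n) (P : Type v) [PartialOrder P] [Finite P]
    (C : Fin n → Type w) [∀ i, LinearOrder (C i)]
    (e : P ↪o ∀ i, C i) :
    ∀ κ : Cardinal.{u}, ℵ₀ ≤ κ → Leadsto (succN κ (n - 1)) κ P := by
  intro κ hκ A hA F hF
  obtain ⟨n, rfl⟩ := Nat.exists_eq_add_one_of_ne_zero hn.ne'
  rw [Nat.add_sub_cancel] at hA
  have hG : ∀ X : Set A, X.Finite → #↥(F X ∪ X) < κ := fun X hX =>
    (mk_union_le _ _).trans_lt (add_lt_of_lt hκ (hF X) (hX.lt_aleph0.trans_le hκ))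
  let r : Fin (n + 1) → P → ℕ := fun i p => {q : P | e q i < e p i}.ncard
  have hr : ∀ i p q, e p i < e q i → r i p < r i q := by
    intro i p q hpq
    refine Set.ncard_lt_ncard ⟨fun s hs => lt_trans hs hpq, fun hsub => ?_⟩ (Set.toFinite _)
    exact lt_irrefl _ (hsub hpq)
  obtain ⟨f, -, hf⟩ := avoidable_succN (G := fun X => F X ∪ X) hκ hG P n r (fun _ => Set.univ)
    (fun _ => by rw [mk_univ, hA])
  -- The defining property of `f`, in terms of the order of `P`.
  have key : ∀ x z, ¬ z ≤ x → f z ∉ F (f '' Set.Iic x) ∪ f '' Set.Iic x := by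
    intro x z hzx
    rw [← e.le_iff_le, Pi.le_def] at hzx
    push Not at hzx
    obtain ⟨i, hi⟩ := hzx
    exact hf i z (Set.Iic x) fun w hw => hr i w z ((e.monotone hw i).trans_lt hi)
  refine ⟨f, fun x z hxz => ?_, ?_⟩
  · have hle : ∀ x z, f x = f z → z ≤ x := fun x z h => by
      by_contra hzx
      exact key x z hzx (Or.inr ⟨x, le_rfl, h⟩)
    exact le_antisymm (hle z x hxz.symm) (hle x z hxz)
  · rintro x y - _ ⟨hFz, z, -, rfl⟩
    by_contra hcon
    exact key x z (fun hzx => hcon ⟨z, hzx, rfl⟩) (Or.inl hFz)
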